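/- arXiv:2011.00128 — 8 statements merged into one kernel-verified Lean document; each statement's English description precedes it below -/
import Mathlib

section
/- The transvections generate the binary symplectic group Sp(2m, F₂): every matrix M over ZMod 2 with M * Ω * Mᵀ = Ω can be written as a finite product Z_{h₁} * Z_{h₂} * ⋯ * Z_{h_k} of transvection matrices with each h_i ≠ 0. -/
open Matrix

section Abstract
variable {V : Type*} [AddCommGroup V] [Module (ZMod 2) V]

/-- Transvection. -/
def tvT (B : V →ₗ[ZMod 2] V →ₗ[ZMod 2] ZMod 2) (h x : V) : V := x + B x h • h

/-- Successive action of a list of transvections. -/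
def tvAct (B : V →ₗ[ZMod 2] V →ₗ[ZMod 2] ZMod 2) : List V → V → V
  | [], x => x
  | h :: l, x => tvAct B l (tvT B h x)

variable (B : V →ₗ[ZMod 2] V →ₗ[ZMod 2] ZMod 2)

theorem tvAct_append (l l' : List V) (x : V) :
    tvAct B (l ++ l') x = tvAct B l' (tvAct B l x) := by
  induction l generalizing x with
  | nil => rfl
  | cons h l ih => exact ih _

theorem zmod2_cases (z : ZMod 2) : z = 0 ∨ z = 1 := by
  revert z; decide

theorem tvT_B (ha : ∀ x, B x x = 0) (hs : ∀ x y, B x y = B y x)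
    (h x y : V) : B (tvT B h x) (tvT B h y) = B x y := by
  simp only [tvT, map_add, map_smul, LinearMap.add_apply, LinearMap.smul_apply, smul_eq_mul, ha,
    hs h y]
  generalize B x y = p
  generalize B x h = q
  generalize B y h = r
  revert p q r; decide

theorem tvAct_B (ha : ∀ x, B x x = 0) (hs : ∀ x y, B x y = B y x)
    (l : List V) (x y : V) : B (tvAct B l x) (tvAct B l y) = B x y := by
  induction l generalizing x y with
  | nil => rfl
  | cons h l ih => exact (ih _ _).trans (tvT_B B ha hs h x y)

theorem tvT_fix (h x : V) (hx : B x h = 0) : tvT B h x = x := by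
  simp [tvT, hx]

theorem tvT_move (ha : ∀ x, B x x = 0) (x y : V) (hx : B x y = 1) : tvT B (x + y) x = y := by
  simp only [tvT, map_add, ha, hx, zero_add, one_smul]
  rw [← add_assoc, ZModModule.add_self, zero_add]

theorem tv_step1 (ha : ∀ x, B x x = 0) (hs : ∀ x y, B x y = B y x)
    (K : Set V) (a b e f : V) (hab : B a b = 1) (hef : B e f = 1)
    (hK : ∀ k ∈ K, B k a = 0 ∧ B k b = 0 ∧ B k e = 0 ∧ B k f = 0) :
    ∃ l, tvAct B l a = e ∧ ∀ k ∈ K, tvAct B l k = k := by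
  have key : ∀ c, (∀ k ∈ K, B k c = 0) → B a c = 1 → B c e = 1 →
      ∃ l, tvAct B l a = e ∧ ∀ k ∈ K, tvAct B l k = k := by
    intro c hc h1 h2
    refine ⟨[a + c, c + e], ?_, ?_⟩
    · simp only [tvAct]
      rw [tvT_move B ha _ _ h1, tvT_move B ha _ _ h2]
    · intro k hk
      obtain ⟨h3, h4, h5, h6⟩ := hK k hk
      simp only [tvAct]
      rw [tvT_fix B (a + c), tvT_fix B] <;> simp [h3, h5, hc k hk]
  rcases zmod2_cases (B b e) with h1 | h1
  · rcases zmod2_cases (B a f) with h2 | h2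
    · refine key (b + f) ?_ ?_ ?_
      · intro k hk
        obtain ⟨h3, h4, h5, h6⟩ := hK k hk
        simp [h4, h6]
      · simp [hab, h2]
      · simp [h1, hs f e, hef]
    · exact key f (fun k hk => (hK k hk).2.2.2) h2 (by rw [hs, hef])
  · exact key b (fun k hk => (hK k hk).2.1) hab h1

theorem tv_step2 (ha : ∀ x, B x x = 0) (hs : ∀ x y, B x y = B y x)
    (K : Set V) (b e f : V) (hab : B e b = 1) (hef : B e f = 1)
    (hK : ∀ k ∈ K, B k b = 0 ∧ B k e = 0 ∧ B k f = 0) :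
    ∃ l, tvAct B l e = e ∧ tvAct B l b = f ∧ ∀ k ∈ K, tvAct B l k = k := by
  have h11 : (1 + 1 : ZMod 2) = 0 := by decide
  rcases zmod2_cases (B b f) with h1 | h1
  · have h2 : B b (e + f) = 1 := by simp [h1, hs b e, hab]
    have h3 : B (e + f) f = 1 := by simp [ha, hef]
    refine ⟨[b + (e + f), (e + f) + f], ?_, ?_, ?_⟩
    · simp only [tvAct]
      rw [tvT_fix B (b + (e + f)), tvT_fix B] <;> simp [hab, hef, ha, h11]
    · simp only [tvAct]
      rw [tvT_move B ha _ _ h2, tvT_move B ha _ _ h3]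
    · intro k hk
      obtain ⟨h3, h4, h5⟩ := hK k hk
      simp only [tvAct]
      rw [tvT_fix B (b + (e + f)), tvT_fix B] <;> simp [h3, h5, h4]
  · refine ⟨[b + f], ?_, ?_, ?_⟩
    · simp only [tvAct]
      rw [tvT_fix B]; simp [hab, hef, h11]
    · exact tvT_move B ha _ _ h1
    · intro k hk
      obtain ⟨h3, h4, h5⟩ := hK k hk
      simp only [tvAct]
      rw [tvT_fix B]; simp [h3, h5]

theorem tv_step (ha : ∀ x, B x x = 0) (hs : ∀ x y, B x y = B y x)
    (K : Set V) (a b e f : V) (hab : B a b = 1) (hef : B e f = 1)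
    (hK : ∀ k ∈ K, B k a = 0 ∧ B k b = 0 ∧ B k e = 0 ∧ B k f = 0) :
    ∃ l, tvAct B l a = e ∧ tvAct B l b = f ∧ ∀ k ∈ K, tvAct B l k = k := by
  obtain ⟨l, h1, h2⟩ := tv_step1 B ha hs K a b e f hab hef hK
  obtain ⟨l', h3, h4, h5⟩ := tv_step2 B ha hs K (tvAct B l b) e f
    (by rw [← h1, tvAct_B B ha hs, hab]) hef (fun k hk => by
      refine ⟨?_, (hK k hk).2.2⟩
      conv_lhs => rw [← h2 k hk]
      rw [tvAct_B B ha hs]; exact (hK k hk).2.1)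
  refine ⟨l ++ l', ?_, ?_, ?_⟩
  · rw [tvAct_append, h1, h3]
  · rw [tvAct_append, h4]
  · intro k hk
    rw [tvAct_append, h2 k hk, h5 k hk]

theorem tv_all (ha : ∀ x, B x x = 0) (hs : ∀ x y, B x y = B y x)
    {ι : Type*} [DecidableEq ι] (R E : ι ⊕ ι → V)
    (hRE : ∀ i j, B (R i) (R j) = B (E i) (E j))
    (hE1 : ∀ i, B (E (Sum.inl i)) (E (Sum.inr i)) = 1)
    (hE0 : ∀ i j : ι ⊕ ι, Sum.elim id id i ≠ Sum.elim id id j → B (E i) (E j) = 0)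
    (S : Finset ι) :
    ∃ l, ∀ i : ι ⊕ ι, Sum.elim id id i ∈ S → tvAct B l (R i) = E i := by
  induction S using Finset.induction_on with
  | empty => exact ⟨[], by simp⟩
  | insert s S hsS ih =>
    obtain ⟨l, hl⟩ := ih
    obtain ⟨l', h1, h2, h3⟩ := tv_step B ha hs
      {k | ∃ j : ι ⊕ ι, Sum.elim id id j ∈ S ∧ E j = k}
      (tvAct B l (R (Sum.inl s))) (tvAct B l (R (Sum.inr s))) (E (Sum.inl s)) (E (Sum.inr s))
      (by rw [tvAct_B B ha hs, hRE, hE1]) (hE1 s) (by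
        rintro _ ⟨j, hj, rfl⟩
        have hne : Sum.elim id id j ≠ s := fun h => hsS (h ▸ hj)
        refine ⟨?_, ?_, hE0 _ _ hne, hE0 _ _ hne⟩
        · rw [← hl j hj, tvAct_B B ha hs, hRE]; exact hE0 _ _ hne
        · rw [← hl j hj, tvAct_B B ha hs, hRE]; exact hE0 _ _ hne)
    refine ⟨l ++ l', fun i hi => ?_⟩
    rw [tvAct_append]
    rcases Finset.mem_insert.1 hi with h | h
    · rcases i with i | i
      · have : i = s := h
        subst this; exact h1
      · have : i = s := h
        subst this; exact h2
    · rw [hl i h]; exact h3 _ ⟨i, h, rfl⟩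

end Abstract

theorem stmt_5 (m : ℕ) (hm : 1 ≤ m)
    (Ω : Matrix (Fin m ⊕ Fin m) (Fin m ⊕ Fin m) (ZMod 2))
    (hΩ : Ω = Matrix.fromBlocks 0 1 1 0)
    (Z : (Fin m ⊕ Fin m → ZMod 2) →
      Matrix (Fin m ⊕ Fin m) (Fin m ⊕ Fin m) (ZMod 2))
    (hZ : ∀ h, Z h = 1 + Ω * Matrix.vecMulVec h h)
    (M : Matrix (Fin m ⊕ Fin m) (Fin m ⊕ Fin m) (ZMod 2))
    (hM : M * Ω * Mᵀ = Ω) :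
    ∃ l : List (Fin m ⊕ Fin m → ZMod 2),
      (∀ h ∈ l, h ≠ 0) ∧ M = (l.map Z).prod := by
  let B : (Fin m ⊕ Fin m → ZMod 2) →ₗ[ZMod 2] (Fin m ⊕ Fin m → ZMod 2) →ₗ[ZMod 2] ZMod 2 :=
    Matrix.toBilin' Ω
  have hB : ∀ x y, B x y = x ⬝ᵥ Ω *ᵥ y := fun x y => Matrix.toBilin'_apply' Ω x y
  have hB' : ∀ x y, B x y = ∑ i, x (Sum.inl i) * y (Sum.inr i)
      + ∑ i, x (Sum.inr i) * y (Sum.inl i) := by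
    intro x y
    rw [hB, hΩ]
    simp [dotProduct, Fintype.sum_sum_type, Matrix.fromBlocks_mulVec]
  have hs : ∀ x y, B x y = B y x := by
    intro x y
    rw [hB', hB', add_comm]
    simp only [mul_comm]
  have ha : ∀ x, B x x = 0 := by
    intro x
    rw [hB']
    simp only [mul_comm (x (Sum.inr _))]
    exact CharTwo.add_self_eq_zero _
  have hZT : ∀ h x, x ᵥ* Z h = tvT B h x := by
    intro h x
    rw [hZ, Matrix.vecMul_add, Matrix.vecMul_one, ← Matrix.vecMul_vecMul, tvT, hB,
      Matrix.dotProduct_mulVec]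
    congr 1
    generalize x ᵥ* Ω = y
    ext i
    simp only [Matrix.vecMul, dotProduct, Matrix.vecMulVec_apply, Finset.sum_mul, mul_assoc,
      Pi.smul_apply, smul_eq_mul]
  have hP : ∀ (l : List (Fin m ⊕ Fin m → ZMod 2)) x, x ᵥ* (l.map Z).prod = tvAct B l x := by
    intro l
    induction l with
    | nil => intro x; simp [tvAct]
    | cons h l ih =>
      intro x
      rw [List.map_cons, List.prod_cons, ← Matrix.vecMul_vecMul, hZT, ih]; rfl
  have hZZ : ∀ h, Z h * Z h = 1 := by
    intro h
    refine Matrix.ext_of_single_vecMul fun i => ?_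
    rw [← Matrix.vecMul_vecMul, hZT, hZT, Matrix.vecMul_one]
    simp only [tvT, map_add, LinearMap.add_apply, map_smul, LinearMap.smul_apply, ha, smul_zero,
      add_zero, add_assoc, ZModModule.add_self]
  have hrev : ∀ l : List (Fin m ⊕ Fin m → ZMod 2),
      (l.map Z).prod * (l.reverse.map Z).prod = 1 := by
    intro l
    induction l with
    | nil => simp
    | cons h l ih =>
      simp only [List.map_cons, List.prod_cons, List.reverse_cons, List.map_append,
        List.prod_append, List.map_nil, List.prod_nil, mul_one]
      rw [mul_assoc, ← mul_assoc _ _ (Z h), ih, one_mul, hZZ]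
  have hnz : ∀ l : List (Fin m ⊕ Fin m → ZMod 2), ∃ l' : List (Fin m ⊕ Fin m → ZMod 2),
      (∀ h ∈ l', h ≠ 0) ∧ (l.map Z).prod = (l'.map Z).prod := by
    intro l
    induction l with
    | nil => exact ⟨[], by simp, rfl⟩
    | cons h l ih =>
      obtain ⟨l', h1, h2⟩ := ih
      by_cases h0 : h = 0
      · refine ⟨l', h1, ?_⟩
        have : Z h = 1 := by
          rw [hZ, h0]; simp
        rw [List.map_cons, List.prod_cons, this, one_mul, h2]
      · refine ⟨h :: l', ?_, ?_⟩
        · intro k hk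
          rcases List.mem_cons.1 hk with rfl | hk
          · exact h0
          · exact h1 k hk
        · simp [h2]
  have hE : ∀ i j, B (Pi.single i 1) (Pi.single j 1) = Ω i j := by
    intro i j
    rw [hB]; simp
  obtain ⟨l, hl⟩ := tv_all B ha hs (fun i => M i) (fun i => Pi.single i 1)
    (by
      intro i j
      rw [hE, hB, ← congrFun (congrFun hM i) j, Matrix.dotProduct_mulVec]
      rfl)
    (by intro i; rw [hE, hΩ]; simp)
    (by
      rintro (i | i) (j | j) hij <;> rw [hE, hΩ] <;> simp at hij ⊢ <;>
        exact Matrix.one_apply_ne hij) Finset.univ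
  have hMP : M * (l.map Z).prod = 1 := by
    refine Matrix.ext_of_single_vecMul fun i => ?_
    rw [← Matrix.vecMul_vecMul, Matrix.single_one_vecMul, hP, Matrix.vecMul_one]
    exact hl i (Finset.mem_univ _)
  obtain ⟨l', h1, h2⟩ := hnz l.reverse
  refine ⟨l', h1, ?_⟩
  rw [← h2, ← mul_one M, ← hrev l, ← mul_assoc, hMP, one_mul]
end

section
/- Let m ≥ 2. The Pauli graph is strongly regular with parameters n = N² − 1, t = N²/2 − 2, λ = N²/4 − 3, μ = N²/4 − 1; that is, SimpleGraph.IsSRGWith holds for the Pauli graph with parameters n = 2^(2m) − 1, k = 2^(2m−1) − 2, ℓ = 2^(2m−2) − 3, μ = 2^(2m−2) − 1. -/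
open Matrix

/-- The symplectic form as a linear functional. -/
noncomputable def pauliForm (m : ℕ) (u : GaloisField 2 m × GaloisField 2 m) :
    (GaloisField 2 m × GaloisField 2 m) →+ ZMod 2 where
  toFun x := Algebra.trace (ZMod 2) (GaloisField 2 m) (u.1 * x.2 + u.2 * x.1)
  map_zero' := by simp
  map_add' x y := by
    rw [← map_add]
    congr 1
    simp only [Prod.fst_add, Prod.snd_add]
    ring

lemma pauliForm_apply (m : ℕ) (u x : GaloisField 2 m × GaloisField 2 m) :
    pauliForm m u x = Algebra.trace (ZMod 2) (GaloisField 2 m) (u.1 * x.2 + u.2 * x.1) := rfl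

lemma pauliForm_add (m : ℕ) (u w x : GaloisField 2 m × GaloisField 2 m) :
    pauliForm m (u + w) x = pauliForm m u x + pauliForm m w x := by
  simp only [pauliForm_apply, ← map_add]
  congr 1
  simp only [Prod.fst_add, Prod.snd_add]
  ring

lemma pauliForm_self (m : ℕ) (u : GaloisField 2 m × GaloisField 2 m) :
    pauliForm m u u = 0 := by
  rw [pauliForm_apply, mul_comm u.2, CharTwo.add_self_eq_zero, map_zero]

lemma pauliForm_comm (m : ℕ) (u w : GaloisField 2 m × GaloisField 2 m) :
    pauliForm m u w = pauliForm m w u := by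
  simp only [pauliForm_apply]
  congr 1
  ring

lemma exists_trace_one (m : ℕ) (a : GaloisField 2 m) (ha : a ≠ 0) :
    ∃ b, Algebra.trace (ZMod 2) (GaloisField 2 m) (a * b) = 1 := by
  obtain ⟨c, hc⟩ := Algebra.trace_surjective (ZMod 2) (GaloisField 2 m) 1
  exact ⟨a⁻¹ * c, by rw [mul_inv_cancel_left₀ ha, hc]⟩

lemma exists_pauliForm_one (m : ℕ) (u : GaloisField 2 m × GaloisField 2 m) (hu : u ≠ 0) :
    ∃ x, pauliForm m u x = 1 := by
  by_cases h : u.1 = 0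
  · have h2 : u.2 ≠ 0 := fun h2 => hu (Prod.ext h h2)
    obtain ⟨b, hb⟩ := exists_trace_one m _ h2
    exact ⟨(b, 0), by simpa [pauliForm_apply] using hb⟩
  · obtain ⟨b, hb⟩ := exists_trace_one m _ h
    exact ⟨(0, b), by simpa [pauliForm_apply] using hb⟩

lemma card_prod_galois (m : ℕ) (hm : m ≠ 0) :
    Nat.card (GaloisField 2 m × GaloisField 2 m) = 2 ^ (2 * m) := by
  rw [Nat.card_prod, GaloisField.card 2 m hm, ← pow_add]
  congr 1
  ring

lemma card_ker_mul {V W : Type*} [AddCommGroup V] [AddCommGroup W] (f : V →+ W)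
    (hf : Function.Surjective f) : {x | f x = 0}.ncard * Nat.card W = Nat.card V := by
  have h := AddSubgroup.card_mul_index f.ker
  rw [AddSubgroup.index_ker, AddMonoidHom.range_eq_top.2 hf, AddSubgroup.card_top] at h
  exact h

lemma ker_one (m : ℕ) (hm : 2 ≤ m) (u : GaloisField 2 m × GaloisField 2 m) (hu : u ≠ 0) :
    {x | pauliForm m u x = 0}.ncard = 2 ^ (2 * m - 1) := by
  obtain ⟨x, hx⟩ := exists_pauliForm_one m u hu
  have hs : Function.Surjective (pauliForm m u) := by
    intro c
    have hc : c = 0 ∨ c = 1 := by revert c; decide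
    rcases hc with rfl | rfl
    · exact ⟨0, map_zero _⟩
    · exact ⟨x, hx⟩
  have h := card_ker_mul _ hs
  rw [card_prod_galois m (by omega), Nat.card_zmod] at h
  have e : 2 ^ (2 * m) = 2 ^ (2 * m - 1) * 2 := by
    rw [← pow_succ]; congr 1; omega
  omega

lemma ker_two (m : ℕ) (hm : 2 ≤ m) (u w : GaloisField 2 m × GaloisField 2 m) (hu : u ≠ 0)
    (hw : w ≠ 0) (huw : u ≠ w) :
    {x | pauliForm m u x = 0 ∧ pauliForm m w x = 0}.ncard = 2 ^ (2 * m - 2) := by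
  obtain ⟨x, hx⟩ := exists_pauliForm_one m u hu
  obtain ⟨y, hy⟩ := exists_pauliForm_one m w hw
  have huw' : u + w ≠ 0 := fun h => huw (by
    rw [add_eq_zero_iff_eq_neg] at h
    rw [h]
    ext <;> simp [CharTwo.neg_eq])
  obtain ⟨z, hz⟩ := exists_pauliForm_one m (u + w) huw'
  rw [pauliForm_add] at hz
  have hs : Function.Surjective ((pauliForm m u).prod (pauliForm m w)) := by
    rintro ⟨c, d⟩
    have key : ∀ a b e f c d : ZMod 2, e + f = 1 → ∃ i j k : Fin 2,
        i.val • 1 + j.val • b + k.val • e = c ∧ i.val • a + j.val • 1 + k.val • f = d := by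
      decide
    obtain ⟨i, j, k, h1, h2⟩ := key (pauliForm m w x) (pauliForm m u y) _ _ c d hz
    refine ⟨i.val • x + j.val • y + k.val • z, ?_⟩
    rw [AddMonoidHom.prod_apply]
    simp only [map_add, map_nsmul, hx, hy, h1, h2]
  have h := card_ker_mul _ hs
  rw [card_prod_galois m (by omega), Nat.card_prod, Nat.card_zmod] at h
  simp only [AddMonoidHom.prod_apply, Prod.mk_eq_zero] at h
  have e : 2 ^ (2 * m) = 2 ^ (2 * m - 2) * 4 := by
    rw [show 4 = 2 ^ 2 by rfl, ← pow_add]; congr 1; omega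
  omega

theorem stmt_8 (m : ℕ) (hm : 2 ≤ m)
    [Fintype {v : GaloisField 2 m × GaloisField 2 m // v ≠ (0, 0)}]
    (G : SimpleGraph {v : GaloisField 2 m × GaloisField 2 m // v ≠ (0, 0)})
    [DecidableRel G.Adj]
    (hG : ∀ u w : {v : GaloisField 2 m × GaloisField 2 m // v ≠ (0, 0)},
      G.Adj u w ↔ u ≠ w ∧
        Algebra.trace (ZMod 2) (GaloisField 2 m)
          (u.val.1 * w.val.2 + u.val.2 * w.val.1) = 0) :
    G.IsSRGWith (2 ^ (2 * m) - 1) (2 ^ (2 * m - 1) - 2)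
      (2 ^ (2 * m - 2) - 3) (2 ^ (2 * m - 2) - 1) := by
  have hG' : ∀ u w, G.Adj u w ↔ u ≠ w ∧ pauliForm m u.val w.val = 0 := hG
  have hne : ∀ u : {v : GaloisField 2 m × GaloisField 2 m // v ≠ (0, 0)}, u.val ≠ 0 :=
    fun u => u.2
  refine ⟨?_, ?_, ?_, ?_⟩
  · rw [← Nat.card_eq_fintype_card, ← card_prod_galois m (by omega)]
    have h := Set.ncard_compl ({(0, 0)} : Set (GaloisField 2 m × GaloisField 2 m))
    rw [Set.ncard_singleton] at h
    exact h
  · intro u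
    rw [← G.card_neighborSet_eq_degree, ← Nat.card_eq_fintype_card, Nat.card_coe_set_eq,
      ← Set.ncard_image_of_injective _ Subtype.val_injective, ← ker_one m hm u.val (hne u),
      show ∀ k : ℕ, k - 2 = k - ({0, u.val} : Set (GaloisField 2 m × GaloisField 2 m)).ncard from
        fun k => congrArg (k - ·) (Set.ncard_pair (hne u).symm).symm,
      ← Set.ncard_sdiff _ (Set.toFinite _)]
    · congr 1
      ext x
      simp only [Set.mem_image, SimpleGraph.mem_neighborSet, hG', Set.mem_sdiff, Set.mem_ofPred_eq,
        Set.mem_insert_iff, Set.mem_singleton_iff]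
      constructor
      · rintro ⟨y, ⟨h1, h2⟩, rfl⟩
        refine ⟨h2, ?_⟩
        rintro (h | h)
        · exact hne y h
        · exact h1 (Subtype.ext h.symm)
      · rintro ⟨h1, h2⟩
        push Not at h2
        exact ⟨⟨x, h2.1⟩, ⟨fun h => h2.2 (by rw [h]), h1⟩, rfl⟩
    · rintro x (rfl | rfl)
      · exact map_zero _
      · exact pauliForm_self _ _
  · intro u w h
    have huw : u.val ≠ w.val := fun e => h.ne (Subtype.ext e)
    have h0 := ((hG' u w).1 h).2
    have h3 : ({0, u.val, w.val} : Set (GaloisField 2 m × GaloisField 2 m)).ncard = 3 :=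
      Set.ncard_eq_three.2 ⟨_, _, _, (hne u).symm, (hne w).symm, huw, rfl⟩
    rw [← Nat.card_eq_fintype_card, Nat.card_coe_set_eq,
      ← Set.ncard_image_of_injective _ Subtype.val_injective,
      ← ker_two m hm u.val w.val (hne u) (hne w) huw, ← h3, ← Set.ncard_sdiff _ (Set.toFinite _)]
    · congr 1
      ext x
      simp only [Set.mem_image, SimpleGraph.mem_commonNeighbors, hG', Set.mem_sdiff,
        Set.mem_ofPred_eq, Set.mem_insert_iff, Set.mem_singleton_iff]
      constructor
      · rintro ⟨y, ⟨⟨h1, h2⟩, h4, h5⟩, rfl⟩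
        refine ⟨⟨h2, h5⟩, ?_⟩
        rintro (h | h | h)
        · exact hne y h
        · exact h1 (Subtype.ext h.symm)
        · exact h4 (Subtype.ext h.symm)
      · rintro ⟨h1, h2⟩
        push Not at h2
        exact ⟨⟨x, h2.1⟩, ⟨⟨fun h => h2.2.1 (by rw [h]), h1.1⟩,
          ⟨fun h => h2.2.2 (by rw [h]), h1.2⟩⟩, rfl⟩
    · rintro x (rfl | rfl | rfl)
      · exact ⟨map_zero _, map_zero _⟩
      · exact ⟨pauliForm_self _ _, by rw [pauliForm_comm]; exact h0⟩
      · exact ⟨h0, pauliForm_self _ _⟩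
  · intro u w hne' h
    have huw : u.val ≠ w.val := fun e => hne' (Subtype.ext e)
    have h0 : pauliForm m u.val w.val ≠ 0 := fun e => h ((hG' u w).2 ⟨hne', e⟩)
    rw [← Nat.card_eq_fintype_card, Nat.card_coe_set_eq,
      ← Set.ncard_image_of_injective _ Subtype.val_injective,
      ← ker_two m hm u.val w.val (hne u) (hne w) huw,
      ← Set.ncard_singleton (0 : GaloisField 2 m × GaloisField 2 m),
      ← Set.ncard_sdiff _ (Set.toFinite _)]
    · congr 1
      ext x
      simp only [Set.mem_image, SimpleGraph.mem_commonNeighbors, hG', Set.mem_sdiff,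
        Set.mem_ofPred_eq, Set.mem_singleton_iff]
      constructor
      · rintro ⟨y, ⟨⟨h1, h2⟩, h4, h5⟩, rfl⟩
        exact ⟨⟨h2, h5⟩, hne y⟩
      · rintro ⟨h1, h2⟩
        refine ⟨⟨x, h2⟩, ⟨⟨?_, h1.1⟩, ⟨?_, h1.2⟩⟩, rfl⟩
        · rintro rfl
          exact h0 (by rw [pauliForm_comm]; exact h1.2)
        · rintro rfl
          exact h0 h1.1
    · rintro x rfl
      exact ⟨map_zero _, map_zero _⟩
end

section
/- Two Pauli pair matrices lie in the same orbit of PSL(2,2^m) acting by right multiplication if and only if they have the same orbit invariant: for M, M' : Matrix (Fin 2) (Fin 2) F with all rows nonzero (M 0 ≠ 0, M 1 ≠ 0, M' 0 ≠ 0, M' 1 ≠ 0), there exists g ∈ Matrix.SpecialLinearGroup (Fin 2) F with M' = M * g if and only if M.det = M'.det and, for every c ∈ F, M 1 = c • M 0 implies M' 1 = c • M' 0 (i.e., when the determinant is 0, the scalar relating the two rows is the same). -/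
open Matrix

theorem exists_SL_row {F : Type*} [Field F] (v : Fin 2 → F) (hv : v ≠ 0) :
    ∃ A : Matrix.SpecialLinearGroup (Fin 2) F, (A : Matrix (Fin 2) (Fin 2) F) 0 = v := by
  by_cases h : v 0 = 0
  · have hb : v 1 ≠ 0 := by
      intro hb
      apply hv
      ext i
      fin_cases i <;> simp [h, hb]
    refine ⟨⟨!![v 0, v 1; -(v 1)⁻¹, 0], ?_⟩, ?_⟩
    · simp [Matrix.det_fin_two, hb]
    · ext i
      fin_cases i <;> simp
  · refine ⟨⟨!![v 0, v 1; 0, (v 0)⁻¹], ?_⟩, ?_⟩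
    · simp [Matrix.det_fin_two, h]
    · ext i
      fin_cases i <;> simp

theorem exists_row_scalar {F : Type*} [Field F] (M : Matrix (Fin 2) (Fin 2) F)
    (h1 : M 0 ≠ 0) (hd : M.det = 0) : ∃ c : F, M 1 = c • M 0 := by
  rw [Matrix.det_fin_two] at hd
  by_cases h : M 0 0 = 0
  · have hb : M 0 1 ≠ 0 := by
      intro hb
      apply h1
      ext i
      fin_cases i <;> simp [h, hb]
    refine ⟨M 1 1 / M 0 1, ?_⟩
    have h10 : M 1 0 = 0 := by simpa [h, hb] using hd
    ext i
    fin_cases i <;> simp [h, h10, hb]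
  · refine ⟨M 1 0 / M 0 0, ?_⟩
    ext i
    fin_cases i
    · simp [h]
    · simp only [Fin.mk_one, Pi.smul_apply, smul_eq_mul]
      field_simp
      linear_combination hd

theorem stmt_10 (m : ℕ) (hm : 1 ≤ m)
    (M M' : Matrix (Fin 2) (Fin 2) (GaloisField 2 m))
    (h1 : M 0 ≠ 0) (h2 : M 1 ≠ 0) (h3 : M' 0 ≠ 0) (h4 : M' 1 ≠ 0) :
    (∃ g : Matrix.SpecialLinearGroup (Fin 2) (GaloisField 2 m),
      M' = M * (g : Matrix (Fin 2) (Fin 2) (GaloisField 2 m))) ↔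
    (M.det = M'.det ∧
      ∀ c : GaloisField 2 m, M 1 = c • M 0 → M' 1 = c • M' 0) := by
  constructor
  · rintro ⟨g, rfl⟩
    refine ⟨by simp, fun c hc => ?_⟩
    rw [Matrix.mul_apply_eq_vecMul, Matrix.mul_apply_eq_vecMul, hc, Matrix.smul_vecMul]
  · rintro ⟨hd, hc⟩
    by_cases h : M.det = 0
    · obtain ⟨c, hM⟩ := exists_row_scalar M h1 h
      have hM' := hc c hM
      obtain ⟨A, hA⟩ := exists_SL_row _ h1
      obtain ⟨B, hB⟩ := exists_SL_row _ h3
      have key : M 0 ᵥ* ((A⁻¹ * B : Matrix.SpecialLinearGroup (Fin 2) (GaloisField 2 m)) :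
          Matrix (Fin 2) (Fin 2) (GaloisField 2 m)) = M' 0 := by
        rw [← hA, ← Matrix.mul_apply_eq_vecMul, ← Matrix.SpecialLinearGroup.coe_mul,
          mul_inv_cancel_left, hB]
      refine ⟨A⁻¹ * B, ?_⟩
      funext i
      rw [Matrix.mul_apply_eq_vecMul]
      fin_cases i
      · exact key.symm
      · change M' 1 = M 1 ᵥ* _
        rw [hM, hM', Matrix.smul_vecMul, key]
    · have hu : IsUnit M.det := isUnit_iff_ne_zero.mpr h
      refine ⟨⟨M⁻¹ * M', ?_⟩, ?_⟩
      · rw [Matrix.det_mul, ← hd, Matrix.det_nonsing_inv, Ring.inverse_mul_cancel _ hu]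
      · exact (Matrix.mul_nonsing_inv_cancel_left _ _ hu).symm
end

section
/- The directed edges of the Pauli graph split by type with the following counts: (i) the number of ordered pairs (u, w) ∈ (F × F)² with u ≠ 0, w ≠ 0, u ≠ w and det(u,w) = 0 (type-1 edges, where the two Paulis lie in the same maximal commutative subgroup) equals (2^(2m) − 1)(2^m − 2) = (N² − 1)(N − 2); (ii) the number of ordered pairs (u, w) ∈ (F × F)² with det(u,w) ≠ 0 and Tr(det(u,w)) = 0 (type-2 edges, commuting Paulis from different maximal commutative subgroups) equals 2^(m−1)·(2^(2m) − 1)·(2^m − 2) = N(N² − 1)(N − 2)/2. -/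
theorem pauli_i {F : Type*} [Field F] [CharP F 2]
    (P : Type*) (e : P ≃ {p : (F × F) × (F × F) //
      p.1 ≠ 0 ∧ p.2 ≠ 0 ∧ p.1 ≠ p.2 ∧ p.1.1 * p.2.2 + p.1.2 * p.2.1 = 0}) :
    Nat.card P = Nat.card {u : F × F // u ≠ 0} * Nat.card {t : F // t ≠ 0 ∧ t ≠ 1} := by
  rw [← Nat.card_prod, Nat.card_congr e]
  symm
  refine Nat.card_congr (Equiv.ofBijective (fun x => ⟨(x.1.1, x.2.1 • x.1.1), ?_⟩) ⟨?_, ?_⟩)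
  · obtain ⟨⟨u, hu⟩, ⟨t, h0, h1⟩⟩ := x
    refine ⟨hu, smul_ne_zero h0 hu, ?_, ?_⟩
    · intro h
      have h2 : (1 - t) • u = 0 := by
        rw [sub_smul, one_smul]; exact sub_eq_zero.mpr h
      rcases smul_eq_zero.mp h2 with h3 | h3
      · exact h1 (sub_eq_zero.mp h3).symm
      · exact hu h3
    · simp only [Prod.smul_fst, Prod.smul_snd, smul_eq_mul]
      have h2 : u.1 * (t * u.2) + u.2 * (t * u.1) = 2 * (u.1 * (t * u.2)) := by ring
      rw [h2, CharTwo.two_eq_zero, zero_mul]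
  · rintro ⟨⟨u, hu⟩, ⟨t, ht⟩⟩ ⟨⟨u', hu'⟩, ⟨t', ht'⟩⟩ h
    simp only [Subtype.mk.injEq, Prod.mk.injEq] at h ⊢
    obtain ⟨rfl, h⟩ := h
    exact ⟨rfl, smul_left_injective F hu h⟩
  · rintro ⟨⟨⟨a, b⟩, ⟨c, d⟩⟩, hu, hw, hne, h⟩
    have h : a * d = b * c := by
      have := CharTwo.add_eq_zero.mp h
      exact this
    have : ∃ t : F, t • (a, b) = (c, d) := by
      by_cases ha : a = 0
      · subst ha
        have hb : b ≠ 0 := fun hb => hu (by simp [hb])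
        refine ⟨d / b, ?_⟩
        have hc : c = 0 := by simpa [hb] using h.symm
        simp [hc, hb]
      · refine ⟨c / a, ?_⟩
        simp only [Prod.smul_mk, smul_eq_mul, Prod.mk.injEq]
        constructor
        · field_simp
        · field_simp; linear_combination -h
    obtain ⟨t, ht⟩ := this
    refine ⟨⟨⟨(a, b), hu⟩, ⟨t, ?_, ?_⟩⟩, ?_⟩
    · rintro rfl; exact hw (by simpa using ht.symm)
    · rintro rfl; exact hne (by simpa using ht)
    · simp only [ht]

theorem pauli_ii {F : Type*} [Field F] [CharP F 2] (Q : F → Prop)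
    (P : Type*) (e : P ≃ {p : (F × F) × (F × F) //
      p.1.1 * p.2.2 + p.1.2 * p.2.1 ≠ 0 ∧ Q (p.1.1 * p.2.2 + p.1.2 * p.2.1)}) :
    Nat.card P = Nat.card {u : F × F // u ≠ 0} *
      (Nat.card {c : F // c ≠ 0 ∧ Q c} * Nat.card F) := by
  classical
  have key : ∀ u : F × F, ∃ v : F × F, u ≠ 0 → u.1 * v.2 + u.2 * v.1 = 1 := by
    rintro ⟨a, b⟩
    by_cases ha : a = 0
    · by_cases hb : b = 0
      · exact ⟨0, fun h => absurd (by simp [ha, hb]) h⟩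
      · exact ⟨(b⁻¹, 0), fun _ => by simp [hb]⟩
    · exact ⟨(0, a⁻¹), fun _ => by simp [ha]⟩
  choose v hv using key
  have two : (2 : F) = 0 := CharTwo.two_eq_zero
  have hdet : ∀ (u : F × F) (c t : F), u ≠ 0 →
      u.1 * (c • v u + t • u).2 + u.2 * (c • v u + t • u).1 = c := by
    intro u c t hu
    simp only [Prod.snd_add, Prod.fst_add, Prod.smul_fst, Prod.smul_snd, smul_eq_mul]
    linear_combination c * hv u hu + t * u.1 * u.2 * two
  rw [← Nat.card_prod, ← Nat.card_prod, Nat.card_congr e]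
  symm
  refine Nat.card_congr (Equiv.ofBijective
    (fun x => ⟨(x.1.1, x.2.1.1 • v x.1.1 + x.2.2 • x.1.1), ?_⟩) ⟨?_, ?_⟩)
  · obtain ⟨⟨u, hu⟩, ⟨c, hc⟩, t⟩ := x
    simp only [hdet u c t hu]
    exact hc
  · rintro ⟨⟨u, hu⟩, ⟨c, hc⟩, t⟩ ⟨⟨u', hu'⟩, ⟨c', hc'⟩, t'⟩ h
    simp only [Subtype.mk.injEq, Prod.mk.injEq] at h ⊢
    obtain ⟨rfl, h⟩ := h
    have h1 := hdet u c t hu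
    rw [h, hdet u c' t' hu] at h1
    subst h1
    exact ⟨rfl, rfl, smul_left_injective F hu (add_left_cancel h)⟩
  · rintro ⟨⟨u, w⟩, h0, hQ⟩
    simp only at h0 hQ
    have hu : u ≠ 0 := by rintro rfl; simp at h0
    refine ⟨⟨⟨u, hu⟩, ⟨_, h0, hQ⟩, (v u).1 * w.2 + (v u).2 * w.1⟩, ?_⟩
    simp only [Subtype.mk.injEq, Prod.mk.injEq, true_and]
    have h1 := hv u hu
    ext
    · simp only [Prod.fst_add, Prod.smul_fst, smul_eq_mul]
      linear_combination w.1 * h1 + u.1 * (v u).1 * w.2 * two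
    · simp only [Prod.snd_add, Prod.smul_snd, smul_eq_mul]
      linear_combination w.2 * h1 + u.2 * (v u).2 * w.1 * two

theorem card_ne_and {α : Type*} [Finite α] (a : α) (Q : α → Prop) (ha : Q a) :
    Nat.card {c : α // c ≠ a ∧ Q c} = Nat.card {c : α // Q c} - 1 := by
  have h1 : Nat.card {c : α // c ≠ a ∧ Q c} = ({c | Q c} \ {a} : Set α).ncard := by
    rw [← Nat.card_coe_set_eq]
    exact Nat.card_congr (Equiv.subtypeEquivRight fun c => by simp [and_comm])
  rw [h1, Set.ncard_diff_singleton_of_mem (by exact ha), ← Nat.card_coe_set_eq]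
  rfl

theorem card_trace_ker (m : ℕ) (hm : 1 ≤ m) :
    Nat.card {c : GaloisField 2 m // Algebra.trace (ZMod 2) (GaloisField 2 m) c = 0}
      = 2 ^ (m - 1) := by
  have h := (Algebra.trace (ZMod 2) (GaloisField 2 m)).finrank_range_add_finrank_ker
  have hs := Algebra.trace_surjective (ZMod 2) (GaloisField 2 m)
  rw [LinearMap.range_eq_top.mpr hs, finrank_top, Module.finrank_self,
    GaloisField.finrank 2 (by omega)] at h
  have h2 : Nat.card (LinearMap.ker (Algebra.trace (ZMod 2) (GaloisField 2 m))) = 2 ^ (m - 1) := by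
    rw [Module.natCard_eq_pow_finrank (K := ZMod 2), Nat.card_zmod]
    congr 1; omega
  exact h2

theorem stmt_13 (m : ℕ) (hm : 1 ≤ m)
    (Tr : GaloisField 2 m → ZMod 2)
    (hTr : Tr = Algebra.trace (ZMod 2) (GaloisField 2 m))
    (det : (GaloisField 2 m × GaloisField 2 m) →
      (GaloisField 2 m × GaloisField 2 m) → GaloisField 2 m)
    (hdet : ∀ u v, det u v = u.1 * v.2 + u.2 * v.1) :
    Nat.card {p : (GaloisField 2 m × GaloisField 2 m) ×
        (GaloisField 2 m × GaloisField 2 m) //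
      p.1 ≠ 0 ∧ p.2 ≠ 0 ∧ p.1 ≠ p.2 ∧ det p.1 p.2 = 0} =
      (2 ^ (2 * m) - 1) * (2 ^ m - 2) ∧
    Nat.card {p : (GaloisField 2 m × GaloisField 2 m) ×
        (GaloisField 2 m × GaloisField 2 m) //
      det p.1 p.2 ≠ 0 ∧ Tr (det p.1 p.2) = 0} =
      2 ^ (m - 1) * (2 ^ (2 * m) - 1) * (2 ^ m - 2) := by
  have hN : Nat.card (GaloisField 2 m) = 2 ^ m := GaloisField.card 2 m (by omega)
  have hU : Nat.card {u : GaloisField 2 m × GaloisField 2 m // u ≠ 0} = 2 ^ (2 * m) - 1 := by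
    have h := card_ne_and (0 : GaloisField 2 m × GaloisField 2 m) (fun _ => True) trivial
    simp only [and_true] at h
    rw [h, Nat.card_congr (Equiv.subtypeUnivEquiv (fun _ => trivial)), Nat.card_prod, hN,
      two_mul, pow_add]
  constructor
  · rw [pauli_i _ (Equiv.subtypeEquivRight fun p => by rw [hdet]), hU]
    congr 1
    rw [card_ne_and (0 : GaloisField 2 m) (fun t => t ≠ 1) zero_ne_one]
    have h := card_ne_and (1 : GaloisField 2 m) (fun _ => True) trivial
    simp only [and_true] at h
    rw [h, Nat.card_congr (Equiv.subtypeUnivEquiv (fun _ => trivial)), hN]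
    omega
  · rw [pauli_ii (fun c => Tr c = 0) _ (Equiv.subtypeEquivRight fun p => by rw [hdet]), hU, hN,
      card_ne_and (0 : GaloisField 2 m) (fun c => Tr c = 0) (by simp [hTr])]
    subst hTr
    rw [card_trace_ker m hm]
    obtain ⟨k, rfl⟩ : ∃ k, m = k + 1 := ⟨m - 1, by omega⟩
    have h1 : (2 : ℕ) ^ (k + 1) - 2 = 2 * (2 ^ k - 1) := by rw [pow_succ]; omega
    rw [h1, Nat.add_sub_cancel, pow_succ 2 k]
    ring
end

section
/- (Transition matrix of the transvection Markov chain on non-edge orbits.) Let a, b ∈ F with a ≠ 0, b ≠ 0 and Tr(a*b) = 1, and set u := (a, 0), v := (0, b) (a representative non-edge with orbit invariant a*b). Then for every y ∈ F with Tr(y) = 1, the number of h ∈ F × F with h ≠ (0,0) and det(τ_h(u), τ_h(v)) = y equals 4^(m−1) + 3·2^(m−1) − 1 if y = a*b, and equals 3·2^(m−1) if y ≠ a*b. (Equivalently, the (N/2)×(N/2) transition matrix on non-edge orbits is Q₁ = ((N²−4)·I + 6N·J)/(4(N²−1)).) -/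
open scoped Classical

theorem aux_count {F : Type} [Field F] [Fintype F] [Algebra (ZMod 2) F] [CharP F 2]
    (T : F →ₗ[ZMod 2] ZMod 2) (k : ℕ)
    (h0 : (Finset.univ.filter (fun x : F => T x = 0)).card = k)
    (h1 : (Finset.univ.filter (fun x : F => T x = 1)).card = k)
    (z : F) (hz : T z = 0) :
    (Finset.univ.filter (fun p : F × F =>
      algebraMap (ZMod 2) F (T p.1) * p.2 + algebraMap (ZMod 2) F (T p.2) * p.1 = z)).card
      = (if z = 0 then k * k else 0) + 3 * k := by
  set T0 := Finset.univ.filter (fun x : F => T x = 0) with hT0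
  set T1 := Finset.univ.filter (fun x : F => T x = 1) with hT1
  have two : ∀ c : ZMod 2, c = 0 ∨ c = 1 := by decide
  have e : (Finset.univ.filter (fun p : F × F =>
      algebraMap (ZMod 2) F (T p.1) * p.2 + algebraMap (ZMod 2) F (T p.2) * p.1 = z))
      = (if z = 0 then T0 ×ˢ T0 else ∅) ∪ (({z} ×ˢ T1) ∪ ((T1 ×ˢ {z}) ∪
        T1.image (fun s => (s, s + z)))) := by
    ext ⟨s, t⟩
    have key : s + t = z ↔ t = s + z := by
      constructor
      · rintro rfl
        rw [← add_assoc, CharTwo.add_self_eq_zero, zero_add]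
      · rintro rfl
        rw [← add_assoc, CharTwo.add_self_eq_zero, zero_add]
    have key2 : (s, t) ∈ T1.image (fun s => (s, s + z)) ↔ T s = 1 ∧ t = s + z := by
      simp only [Finset.mem_image, Prod.mk.injEq, hT1, Finset.mem_filter, Finset.mem_univ,
        true_and]
      constructor
      · rintro ⟨x, hx, rfl, rfl⟩
        exact ⟨hx, rfl⟩
      · rintro ⟨hx, rfl⟩
        exact ⟨s, hx, rfl, rfl⟩
    have key3 : (s, t) ∈ (if z = 0 then T0 ×ˢ T0 else ∅) ↔ z = 0 ∧ T s = 0 ∧ T t = 0 := by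
      split_ifs with h <;> simp [h, hT0]
    rw [Finset.mem_union, Finset.mem_union, Finset.mem_union, key2, key3]
    simp only [Finset.mem_filter, Finset.mem_univ, true_and, Finset.mem_product,
      Finset.mem_singleton, hT1]
    rcases two (T s) with hs | hs <;> rcases two (T t) with ht | ht
    · simp [hs, ht, eq_comm]
    · simp [hs, ht]
    · simp only [hs, ht, map_one, map_zero, one_mul, zero_mul, add_zero]
      constructor
      · intro h; simp [h]
      · rintro (h | h | h | h)
        · simp at h
        · simp at h
        · exact h.2
        · have := congrArg T h.2
          simp [hs, ht, hz] at this
    · simp only [hs, ht, map_one, one_mul]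
      rw [add_comm t s, key]
      constructor
      · intro h; simp [h]
      · rintro (h | h | h | h)
        · simp at h
        · rw [h.1, hz] at hs; simp at hs
        · rw [h.2, hz] at ht; simp at ht
        · exact h.2
  rw [e, Finset.card_union_of_disjoint, Finset.card_union_of_disjoint,
    Finset.card_union_of_disjoint, Finset.card_image_of_injective]
  · have : (if z = 0 then T0 ×ˢ T0 else ∅).card = (if z = 0 then k * k else 0) := by
      split_ifs <;> simp [h0]
    rw [this]
    simp [h1]
    ring
  · intro x y h
    exact (Prod.mk.inj h).1
  · rw [Finset.disjoint_left]
    rintro ⟨s, t⟩ h h'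
    simp [hT1] at h h'
    obtain ⟨h2, h3⟩ := h
    have := congrArg T h'.2
    simp [h'.1, h3, hz] at this
  · rw [Finset.disjoint_left]
    rintro ⟨s, t⟩ h h'
    simp [hT1] at h h'
    obtain ⟨h2, h3⟩ := h
    rw [← h3, hz] at h'
    simp at h'
  · rw [Finset.disjoint_left]
    rintro ⟨s, t⟩ h h'
    split_ifs at h with h4
    · simp [hT1, hT0] at h h'
      simp [h.1, h.2] at h'
    · simp at h

theorem stmt_14 (m : ℕ) (hm : 1 ≤ m)
    (Tr : GaloisField 2 m → ZMod 2)
    (hTr : Tr = Algebra.trace (ZMod 2) (GaloisField 2 m))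
    (τ : (GaloisField 2 m × GaloisField 2 m) →
      (GaloisField 2 m × GaloisField 2 m) →
      (GaloisField 2 m × GaloisField 2 m))
    (hτ : ∀ h x, τ h x = x +
      (algebraMap (ZMod 2) (GaloisField 2 m) (Tr (x.1 * h.2 + x.2 * h.1))) • h)
    (det : (GaloisField 2 m × GaloisField 2 m) →
      (GaloisField 2 m × GaloisField 2 m) → GaloisField 2 m)
    (hdet : ∀ u v, det u v = u.1 * v.2 + u.2 * v.1)
    (a b : GaloisField 2 m) (ha : a ≠ 0) (hb : b ≠ 0) (hab : Tr (a * b) = 1)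
    (y : GaloisField 2 m) (hy : Tr y = 1) :
    Nat.card {h : GaloisField 2 m × GaloisField 2 m //
      h ≠ (0, 0) ∧ det (τ h (a, 0)) (τ h (0, b)) = y} =
    if y = a * b then 4 ^ (m - 1) + 3 * 2 ^ (m - 1) - 1
    else 3 * 2 ^ (m - 1) := by
  haveI : Fintype (GaloisField 2 m) := Fintype.ofFinite _
  obtain ⟨n, rfl⟩ : ∃ n, m = n + 1 := ⟨m - 1, by omega⟩
  subst hTr
  simp only [Nat.add_sub_cancel]
  generalize hT : Algebra.trace (ZMod 2) (GaloisField 2 (n + 1)) = T at *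
  have two : ∀ c : ZMod 2, c = 0 ∨ c = 1 := by decide
  have hcard : Fintype.card (GaloisField 2 (n + 1)) = 2 ^ (n + 1) := by
    rw [← Nat.card_eq_fintype_card]; exact GaloisField.card 2 (n + 1) (by omega)
  have h01 : (Finset.univ.filter (fun x : (GaloisField 2 (n + 1)) => T x = 0)).card
      = (Finset.univ.filter (fun x : (GaloisField 2 (n + 1)) => T x = 1)).card := by
    apply Finset.card_bij (fun x _ => x + a * b)
    · intro x hx
      simp at hx
      simp [hx, hab]
    · intro x _ x' _ h
      exact add_right_cancel h
    · intro x hx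
      simp at hx
      refine ⟨x + a * b, ?_, ?_⟩
      · simp only [Finset.mem_filter, Finset.mem_univ, true_and, map_add, hx, hab]
        decide
      · rw [add_assoc, CharTwo.add_self_eq_zero, add_zero]
  have hsum : (Finset.univ.filter (fun x : (GaloisField 2 (n + 1)) => T x = 0)).card
      + (Finset.univ.filter (fun x : (GaloisField 2 (n + 1)) => T x = 1)).card = 2 ^ (n + 1) := by
    rw [← hcard, ← Finset.card_univ,
      ← Finset.card_filter_add_card_filter_not (s := Finset.univ) (fun x : (GaloisField 2 (n + 1)) => T x = 0)]
    congr 2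
    ext x
    rcases two (T x) with h | h <;> simp [h]
  have h0 : (Finset.univ.filter (fun x : (GaloisField 2 (n + 1)) => T x = 0)).card = 2 ^ n := by
    rw [pow_succ] at hsum; omega
  have h1 := h01.symm.trans h0
  have hz : T (y + a * b) = 0 := by
    rw [map_add, hy, hab]; decide
  have main := aux_count T (2 ^ n) h0 h1 (y + a * b) hz
  have hz0 : y + a * b = 0 ↔ y = a * b := CharTwo.add_eq_zero
  simp only [hz0] at main
  have hd : ∀ h : (GaloisField 2 (n + 1)) × (GaloisField 2 (n + 1)), det (τ h (a, 0)) (τ h (0, b)) = y ↔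
      algebraMap (ZMod 2) (GaloisField 2 (n + 1)) (T (b * h.1)) * (a * h.2)
        + algebraMap (ZMod 2) (GaloisField 2 (n + 1)) (T (a * h.2)) * (b * h.1) = y + a * b := by
    rintro ⟨h1, h2⟩
    rw [hdet, hτ, hτ]
    simp only [Prod.fst_add, Prod.snd_add, Prod.smul_fst, Prod.smul_snd, smul_eq_mul,
      zero_mul, add_zero, zero_add]
    generalize algebraMap (ZMod 2) (GaloisField 2 (n + 1)) (T (b * h1)) = q
    generalize algebraMap (ZMod 2) (GaloisField 2 (n + 1)) (T (a * h2)) = p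
    have c2 : (2 : (GaloisField 2 (n + 1))) = 0 := CharTwo.two_eq_zero
    constructor
    · intro h
      linear_combination h - (a * b + p * q * h1 * h2) * c2
    · intro h
      linear_combination h + (a * b + p * q * h1 * h2) * c2
  have hall : (Finset.univ.filter (fun h : (GaloisField 2 (n + 1)) × (GaloisField 2 (n + 1)) => det (τ h (a, 0)) (τ h (0, b)) = y)).card
      = (if y = a * b then 2 ^ n * 2 ^ n else 0) + 3 * 2 ^ n := by
    rw [← main]
    apply Finset.card_bij (fun h _ => (b * h.1, a * h.2))
    · intro h hh
      simpa using (hd h).1 (by simpa using hh)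
    · rintro ⟨x1, x2⟩ _ ⟨y1, y2⟩ _ h
      simpa [ha, hb] using h
    · rintro ⟨s, t⟩ hh
      have e1 : b * (b⁻¹ * s) = s := mul_inv_cancel_left₀ hb s
      have e2 : a * (a⁻¹ * t) = t := mul_inv_cancel_left₀ ha t
      refine ⟨(b⁻¹ * s, a⁻¹ * t), ?_, ?_⟩
      · simp only [Finset.mem_filter, Finset.mem_univ, true_and, hd, e1, e2]
        simpa using hh
      · simp only [e1, e2]
  have hzero : det (τ (0, 0) (a, 0)) (τ (0, 0) (0, b)) = y ↔ y = a * b := by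
    rw [hd, ← hz0]
    simp [eq_comm]
  rw [Nat.card_eq_fintype_card, Fintype.card_subtype]
  have he : (Finset.univ.filter (fun h : (GaloisField 2 (n + 1)) × (GaloisField 2 (n + 1)) => h ≠ (0, 0) ∧
      det (τ h (a, 0)) (τ h (0, b)) = y)) =
      (Finset.univ.filter (fun h : (GaloisField 2 (n + 1)) × (GaloisField 2 (n + 1)) => det (τ h (a, 0)) (τ h (0, b)) = y)).erase (0, 0) := by
    ext h
    simp only [Finset.mem_filter, Finset.mem_univ, true_and, Finset.mem_erase]
  rw [he, Finset.card_erase_eq_ite, hall]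
  simp only [Finset.mem_filter, Finset.mem_univ, true_and, hzero]
  have h4 : 4 ^ n = 2 ^ n * 2 ^ n := by rw [← mul_pow]; norm_num
  split_ifs
  · rw [h4]
  · simp
end

section
/- (Type-1 rows of the transition matrix of the transvection Markov chain on edge orbits.) Let a, b ∈ F with a ≠ 0, b ≠ 0 and a ≠ b, and set u := (a, 0), v := (b, 0) (a representative type-1 edge). Then: (i) for every h ∈ F × F with h ≠ (0,0), det(τ_h(u), τ_h(v)) = 0 if and only if (τ_h(u), τ_h(v)) = (u, v) (a transvection never moves a type-1 edge to a different type-1 orbit); (ii) the number of h ≠ (0,0) with (τ_h(u), τ_h(v)) = (u, v) equals 4^(m−1) − 1 = (N² − 4)/4; consequently the number of h ≠ (0,0) with det(τ_h(u), τ_h(v)) ≠ 0 equals 3·4^(m−1) = 3N²/4. -/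
theorem aux_trace_ne (m : ℕ) (c : GaloisField 2 m) (hc : c ≠ 0) :
    ∃ x, Algebra.trace (ZMod 2) (GaloisField 2 m) (c * x) = 1 := by
  obtain ⟨y, hy⟩ := Algebra.trace_surjective (ZMod 2) (GaloisField 2 m) 1
  exact ⟨c⁻¹ * y, by rw [mul_inv_cancel_left₀ hc, hy]⟩

noncomputable def auxPhi (m : ℕ) (a b : GaloisField 2 m) :
    (GaloisField 2 m × GaloisField 2 m) →+ ZMod 2 × ZMod 2 where
  toFun h := (Algebra.trace (ZMod 2) (GaloisField 2 m) (a * h.2),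
    Algebra.trace (ZMod 2) (GaloisField 2 m) (b * h.2))
  map_zero' := by simp
  map_add' x y := by simp [mul_add]

theorem auxPhi_surj (m : ℕ) (a b : GaloisField 2 m) (ha : a ≠ 0) (hb : b ≠ 0) (hab : a ≠ b) :
    Function.Surjective (auxPhi m a b) := by
  have key : ∀ p q : ZMod 2 × ZMod 2, p ≠ 0 → q ≠ 0 → p ≠ q →
      ∀ r, r = 0 ∨ r = p ∨ r = q ∨ r = p + q := by decide
  have hx : ∃ x, (auxPhi m a b x).1 = 1 := by
    obtain ⟨x, hx⟩ := aux_trace_ne m a ha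
    exact ⟨(0, x), hx⟩
  have hy : ∃ x, (auxPhi m a b x).2 = 1 := by
    obtain ⟨x, hx⟩ := aux_trace_ne m b hb
    exact ⟨(0, x), hx⟩
  have hz : ∃ x, (auxPhi m a b x).1 - (auxPhi m a b x).2 = 1 := by
    obtain ⟨x, hx⟩ := aux_trace_ne m (a - b) (sub_ne_zero.2 hab)
    refine ⟨(0, x), ?_⟩
    rw [sub_mul, map_sub] at hx
    exact hx
  obtain ⟨x, hx⟩ := hx
  obtain ⟨y, hy⟩ := hy
  obtain ⟨z, hz⟩ := hz
  have fin : ∀ p q, auxPhi m a b p ≠ 0 → auxPhi m a b q ≠ 0 →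
      auxPhi m a b p ≠ auxPhi m a b q → Function.Surjective (auxPhi m a b) := by
    intro p q h1 h2 h3 r
    rcases key _ _ h1 h2 h3 r with h | h | h | h
    · exact ⟨0, by rw [h, map_zero]⟩
    · exact ⟨p, h.symm⟩
    · exact ⟨q, h.symm⟩
    · exact ⟨p + q, by rw [h, map_add]⟩
  have dec : ∀ p q r : ZMod 2 × ZMod 2, p.1 = 1 → q.2 = 1 → r.1 - r.2 = 1 →
      (r ≠ 0 ∧ p ≠ 0 ∧ r ≠ p) ∨ (r ≠ 0 ∧ q ≠ 0 ∧ r ≠ q) := by decide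
  rcases dec _ _ _ hx hy hz with ⟨h1, h2, h3⟩ | ⟨h1, h2, h3⟩
  · exact fin _ _ h1 h2 h3
  · exact fin _ _ h1 h2 h3

theorem aux_card (m : ℕ) (hm : 1 ≤ m) (a b : GaloisField 2 m)
    (ha : a ≠ 0) (hb : b ≠ 0) (hab : a ≠ b) :
    Nat.card (auxPhi m a b).ker = 4 ^ (m - 1) := by
  have h1 := (auxPhi m a b).ker.card_mul_index
  rw [AddSubgroup.index_ker, AddMonoidHom.range_eq_top.2 (auxPhi_surj m a b ha hb hab),
    Nat.card_prod, GaloisField.card 2 m (by omega)] at h1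
  have h2 : Nat.card (⊤ : AddSubgroup (ZMod 2 × ZMod 2)) = 4 := by
    rw [AddSubgroup.card_top, Nat.card_prod]; simp
  rw [h2, ← mul_pow] at h1
  obtain ⟨k, rfl⟩ : ∃ k, m = k + 1 := ⟨m - 1, by omega⟩
  simp only [Nat.add_sub_cancel]
  norm_num [pow_succ] at h1
  exact h1

theorem stmt_16 (m : ℕ) (hm : 1 ≤ m)
    (Tr : GaloisField 2 m → ZMod 2)
    (hTr : Tr = Algebra.trace (ZMod 2) (GaloisField 2 m))
    (τ : (GaloisField 2 m × GaloisField 2 m) →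
      (GaloisField 2 m × GaloisField 2 m) →
      (GaloisField 2 m × GaloisField 2 m))
    (hτ : ∀ h x, τ h x = x +
      (algebraMap (ZMod 2) (GaloisField 2 m) (Tr (x.1 * h.2 + x.2 * h.1))) • h)
    (det : (GaloisField 2 m × GaloisField 2 m) →
      (GaloisField 2 m × GaloisField 2 m) → GaloisField 2 m)
    (hdet : ∀ u v, det u v = u.1 * v.2 + u.2 * v.1)
    (a b : GaloisField 2 m) (ha : a ≠ 0) (hb : b ≠ 0) (hab : a ≠ b) :
    (∀ h : GaloisField 2 m × GaloisField 2 m, h ≠ (0, 0) →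
      (det (τ h (a, 0)) (τ h (b, 0)) = 0 ↔
        τ h (a, 0) = (a, 0) ∧ τ h (b, 0) = (b, 0))) ∧
    Nat.card {h : GaloisField 2 m × GaloisField 2 m //
      h ≠ (0, 0) ∧ τ h (a, 0) = (a, 0) ∧ τ h (b, 0) = (b, 0)} =
      4 ^ (m - 1) - 1 ∧
    Nat.card {h : GaloisField 2 m × GaloisField 2 m //
      h ≠ (0, 0) ∧ det (τ h (a, 0)) (τ h (b, 0)) ≠ 0} =
      3 * 4 ^ (m - 1) := by
  subst hTr
  have z2 : ∀ z : ZMod 2, z = 0 ∨ z = 1 := by decide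
  have : Finite (GaloisField 2 m) := inferInstance
  have hfix : ∀ h : GaloisField 2 m × GaloisField 2 m, h ≠ (0, 0) → ∀ c,
      (τ h (c, 0) = (c, 0) ↔ Algebra.trace (ZMod 2) (GaloisField 2 m) (c * h.2) = 0) := by
    intro h hh c
    rw [hτ]
    simp only [zero_mul, add_zero]
    rcases z2 (Algebra.trace (ZMod 2) (GaloisField 2 m) (c * h.2)) with h0 | h0
    · simp [h0]
    · rw [h0]
      have hh0 : ¬ h = 0 := hh
      simpa using hh0
  have hker : ∀ h, h ∈ (auxPhi m a b).ker ↔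
      (Algebra.trace (ZMod 2) (GaloisField 2 m) (a * h.2) = 0 ∧
       Algebra.trace (ZMod 2) (GaloisField 2 m) (b * h.2) = 0) := by
    intro h
    rw [AddMonoidHom.mem_ker]
    exact Prod.mk_eq_zero
  have hd : ∀ h : GaloisField 2 m × GaloisField 2 m,
      (det (τ h (a, 0)) (τ h (b, 0)) = 0 ↔ h ∈ (auxPhi m a b).ker) := by
    intro h
    rw [hker]
    have hab' : a + b ≠ 0 := fun h => hab (CharTwo.add_eq_zero.1 h)
    have e : det (τ h (a, 0)) (τ h (b, 0)) = h.2 *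
        (a * algebraMap (ZMod 2) (GaloisField 2 m)
          (Algebra.trace (ZMod 2) (GaloisField 2 m) (b * h.2)) +
        algebraMap (ZMod 2) (GaloisField 2 m)
          (Algebra.trace (ZMod 2) (GaloisField 2 m) (a * h.2)) * b) := by
      rw [hdet, hτ, hτ]
      simp only [zero_mul, add_zero, Prod.fst_add, Prod.snd_add, Prod.smul_fst, Prod.smul_snd,
        smul_eq_mul, zero_add]
      linear_combination (algebraMap (ZMod 2) (GaloisField 2 m)
          (Algebra.trace (ZMod 2) (GaloisField 2 m) (b * h.2)) *
        algebraMap (ZMod 2) (GaloisField 2 m)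
          (Algebra.trace (ZMod 2) (GaloisField 2 m) (a * h.2)) * h.1 * h.2) *
          (CharTwo.two_eq_zero : (2 : GaloisField 2 m) = 0)
    rw [e]
    by_cases h2 : h.2 = 0
    · simp [h2]
    rw [mul_eq_zero, or_iff_right h2]
    rcases z2 (Algebra.trace (ZMod 2) (GaloisField 2 m) (a * h.2)) with h0 | h0 <;>
    rcases z2 (Algebra.trace (ZMod 2) (GaloisField 2 m) (b * h.2)) with h1 | h1 <;>
    simp [h0, h1, ha, hb, hab']
  have hK := aux_card m hm a b ha hb hab
  have hKn : ((auxPhi m a b).ker : Set (GaloisField 2 m × GaloisField 2 m)).ncard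
      = 4 ^ (m - 1) := hK
  refine ⟨?_, ?_, ?_⟩
  · intro h hh
    rw [hd, hfix h hh, hfix h hh, hker]
  · change Set.ncard {h : GaloisField 2 m × GaloisField 2 m |
      h ≠ (0, 0) ∧ τ h (a, 0) = (a, 0) ∧ τ h (b, 0) = (b, 0)} = _
    rw [← hKn, ← Set.ncard_sdiff_singleton_of_mem (zero_mem (auxPhi m a b).ker)]
    congr 1
    ext h
    simp only [Set.mem_ofPred_eq, Set.mem_sdiff, SetLike.mem_coe, Set.mem_singleton_iff]
    constructor
    · rintro ⟨hh, h1, h2⟩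
      exact ⟨(hker h).2 ⟨(hfix h hh a).1 h1, (hfix h hh b).1 h2⟩, hh⟩
    · rintro ⟨h1, hh⟩
      exact ⟨hh, (hfix h hh a).2 ((hker h).1 h1).1, (hfix h hh b).2 ((hker h).1 h1).2⟩
  · change Set.ncard {h : GaloisField 2 m × GaloisField 2 m |
      h ≠ (0, 0) ∧ det (τ h (a, 0)) (τ h (b, 0)) ≠ 0} = _
    have e : {h : GaloisField 2 m × GaloisField 2 m |
        h ≠ (0, 0) ∧ det (τ h (a, 0)) (τ h (b, 0)) ≠ 0} =
        ((auxPhi m a b).ker : Set (GaloisField 2 m × GaloisField 2 m))ᶜ := by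
      ext h
      simp only [Set.mem_ofPred_eq, Set.mem_compl_iff, SetLike.mem_coe, ne_eq, hd]
      constructor
      · exact fun h => h.2
      · intro h1
        refine ⟨?_, h1⟩
        rintro rfl
        exact h1 (zero_mem (auxPhi m a b).ker)
    rw [e]
    have h1 := Set.ncard_add_ncard_compl
      ((auxPhi m a b).ker : Set (GaloisField 2 m × GaloisField 2 m))
    rw [hKn, Nat.card_prod, GaloisField.card 2 m (by omega), ← mul_pow] at h1
    obtain ⟨k, rfl⟩ : ∃ k, m = k + 1 := ⟨m - 1, by omega⟩
    simp only [Nat.add_sub_cancel] at h1 ⊢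
    norm_num [pow_succ] at h1
    omega
end

section
/- (Stationary distribution of the edge-orbit chain.) The row vector w₁ := Sum.elim (fun _ => (1 : ℝ)/N) (fun _ => (1 : ℝ)) on Fin M₁ ⊕ Fin M₂ satisfies Matrix.vecMul w₁ Q₀ = w₁; that is, the distribution putting mass proportional to 1/N on each type-1 orbit and 1 on each type-2 orbit (the push-forward of the uniform distribution on directed edges) is stationary for the transvection Markov chain on edge orbits, for every matrix R with the given row and column sums. -/
open Matrix

theorem stmt_18 (m : ℕ) (hm : 2 ≤ m)
    (N : ℝ) (hN : N = 2 ^ m)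
    (M₁ M₂ : ℕ) (hM₁ : M₁ = 2 ^ m - 2) (hM₂ : M₂ = (2 ^ m - 2) / 2)
    (R : Matrix (Fin M₂) (Fin M₁) ℝ)
    (hrow : ∀ i, ∑ j, R i j = 6 * N)
    (hcol : ∀ j, ∑ i, R i j = 3 * N)
    (Q₀ : Matrix (Fin M₁ ⊕ Fin M₂) (Fin M₁ ⊕ Fin M₂) ℝ)
    (hQ : Q₀ = (4 * (N ^ 2 - 1) : ℝ)⁻¹ •
      Matrix.fromBlocks
        ((N ^ 2 - 4) • (1 : Matrix (Fin M₁) (Fin M₁) ℝ))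
        (N • Rᵀ)
        R
        ((N ^ 2 - 4) • (1 : Matrix (Fin M₂) (Fin M₂) ℝ) +
          (6 * N) • (Matrix.of fun _ _ => (1 : ℝ)))) :
    Matrix.vecMul (Sum.elim (fun _ => (1 : ℝ) / N) (fun _ => (1 : ℝ))) Q₀ =
      Sum.elim (fun _ => (1 : ℝ) / N) (fun _ => (1 : ℝ)) := by
  have hN4 : (4 : ℝ) ≤ N := by
    rw [hN]
    calc (4 : ℝ) = 2 ^ 2 := by norm_num
      _ ≤ 2 ^ m := pow_le_pow_right₀ (by norm_num) hm
  have hN0 : N ≠ 0 := by linarith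
  have hD : N ^ 2 - 1 ≠ 0 := by nlinarith
  have hM : 2 * (M₂ : ℝ) + 2 = N := by
    obtain ⟨k, rfl⟩ : ∃ k, m = k + 1 := ⟨m - 1, by omega⟩
    have h1 : 1 ≤ 2 ^ k := Nat.one_le_two_pow
    have h2 : 2 * M₂ + 2 = 2 ^ (k + 1) := by
      rw [pow_succ] at *
      omega
    rw [hN]
    exact_mod_cast h2
  subst hQ
  ext (j | i)
  · simp only [Matrix.vecMul, dotProduct, Fintype.sum_sum_type, Sum.elim_inl, Sum.elim_inr,
      Matrix.smul_apply, Matrix.fromBlocks_apply₁₁, Matrix.fromBlocks_apply₂₁, smul_eq_mul,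
      Matrix.one_apply, one_mul, ← Finset.mul_sum, hcol]
    simp only [mul_ite, mul_one, mul_zero, Finset.sum_ite_eq', Finset.mem_univ, if_true]
    field_simp
    ring
  · simp only [Matrix.vecMul, dotProduct, Fintype.sum_sum_type, Sum.elim_inl, Sum.elim_inr,
      Matrix.smul_apply, Matrix.fromBlocks_apply₁₂, Matrix.fromBlocks_apply₂₂, smul_eq_mul,
      Matrix.transpose_apply, Matrix.add_apply, Matrix.of_apply,
      Matrix.one_apply, one_mul, ← Finset.mul_sum, hrow, Finset.sum_add_distrib]
    simp only [mul_ite, mul_one, mul_zero, Finset.sum_ite_eq', Finset.mem_univ, if_true,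
      Finset.sum_const, Finset.card_univ, Fintype.card_fin, nsmul_eq_mul]
    have hM' : (M₂ : ℝ) = (N - 2) / 2 := by linarith
    rw [hM']
    field_simp
    ring
end

section
/- (Second eigenvector of the edge-orbit chain.) The row vector w₂ := Sum.elim (fun _ => (1 : ℝ)) (fun _ => (-2 : ℝ)) on Fin M₁ ⊕ Fin M₂ satisfies Matrix.vecMul w₂ Q₀ = ((N² − 6*N − 4)/(4*(N² − 1))) • w₂; that is, w₂ is a left eigenvector of Q₀ with eigenvalue (N² − 6N − 4)/(4(N² − 1)), for every matrix R with the given row and column sums. -/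
open Matrix

theorem stmt_19 (m : ℕ) (hm : 2 ≤ m)
    (N : ℝ) (hN : N = 2 ^ m)
    (M₁ M₂ : ℕ) (hM₁ : M₁ = 2 ^ m - 2) (hM₂ : M₂ = (2 ^ m - 2) / 2)
    (R : Matrix (Fin M₂) (Fin M₁) ℝ)
    (hrow : ∀ i, ∑ j, R i j = 6 * N)
    (hcol : ∀ j, ∑ i, R i j = 3 * N)
    (Q₀ : Matrix (Fin M₁ ⊕ Fin M₂) (Fin M₁ ⊕ Fin M₂) ℝ)
    (hQ : Q₀ = (4 * (N ^ 2 - 1) : ℝ)⁻¹ •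
      Matrix.fromBlocks
        ((N ^ 2 - 4) • (1 : Matrix (Fin M₁) (Fin M₁) ℝ))
        (N • Rᵀ)
        R
        ((N ^ 2 - 4) • (1 : Matrix (Fin M₂) (Fin M₂) ℝ) +
          (6 * N) • (Matrix.of fun _ _ => (1 : ℝ)))) :
    Matrix.vecMul (Sum.elim (fun _ => (1 : ℝ)) (fun _ => (-2 : ℝ))) Q₀ =
      ((N ^ 2 - 6 * N - 4) / (4 * (N ^ 2 - 1))) •
        Sum.elim (fun _ => (1 : ℝ)) (fun _ => (-2 : ℝ)) := by
  have h4 : 2 * M₂ + 2 = 2 ^ m := by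
    obtain ⟨k, rfl⟩ : ∃ k, m = k + 1 := ⟨m - 1, by omega⟩
    have hk : 1 ≤ 2 ^ k := Nat.one_le_two_pow
    rw [pow_succ] at *
    omega
  have hM : 2 * (M₂ : ℝ) + 2 = N := by
    rw [hN]
    exact_mod_cast h4
  clear hN hM₁ hM₂ h4
  subst hQ
  rw [Matrix.vecMul_smul, Matrix.vecMul_fromBlocks, div_eq_inv_mul,
    mul_smul (4 * (N ^ 2 - 1))⁻¹ (N ^ 2 - 6 * N - 4)]
  congr 1
  funext x
  rcases x with j | j
  · simp [Matrix.vecMul, dotProduct, Matrix.one_apply, ← Finset.mul_sum, hcol]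
    ring
  · simp [Matrix.vecMul, dotProduct, Matrix.one_apply, ← Finset.mul_sum, hrow,
      mul_add, Finset.sum_add_distrib]
    rw [← hM]
    ring
end
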